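/- Regularity for the bidirectional type system: if Γ ⊢ a ⇒ A and ⊢ Γ, then Γ ⊢ A : Type. -/

import Mathlib

/-! Regularity is proved together with soundness of the bidirectional system, by mutual induction:
in a well-formed context, `Γ ⊢ a ⇒ A` gives both `Γ ⊢ a : A` and `Γ ⊢ A : Type`, while
`Γ ⊢ a ⇐ A` gives `Γ ⊢ a : A` as soon as `Γ ⊢ A : Type`. The declarative system has no conversion
rule, so `Γ ⊢ (x:A) → B : Type` inverts to `Γ ⊢ A : Type` and `Γ, x:A ⊢ B : Type`
(`HasType.pi_inv`); this supplies the premises on types in the cases of λ-abstractions and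
applications.

What remains is that the declarative system is stable under weakening (for variables, whose types
live in a shorter context) and under substitution (for applications). Both are obtained from
simultaneous renamings `Tm.ren` and simultaneous substitutions `Tm.inst`, whose composition laws
are easy inductions and of which `Tm.lift` and `Tm.subst` are special cases.
-/

/-- Terms of the core pi-forall language, with de Bruijn indices for variables.
    `lam a` binds one variable in `a`, and `pi A B` binds one variable in `B`.
    (De Bruijn representation identifies terms up to α-equivalence.) -/
inductive Tm : Type
  | var : Nat → Tm
  | lam : Tm → Tm
  | app : Tm → Tm → Tm
  | pi  : Tm → Tm → Tm
  | type : Tm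
  | annot : Tm → Tm → Tm
  deriving DecidableEq

namespace Tm

/-- `lift d c t` shifts by `d` every variable of `t` whose index is at least `c`. -/
def lift (d c : Nat) : Tm → Tm
  | var k => if k < c then var k else var (k + d)
  | lam a => lam (lift d (c + 1) a)
  | app a b => app (lift d c a) (lift d c b)
  | pi A B => pi (lift d c A) (lift d (c + 1) B)
  | type => type
  | annot a A => annot (lift d c a) (lift d c A)

/-- `subst a x b` is the capture-avoiding substitution `b[a/x]` of `a`
    for variable `x` in `b` (indices above `x` are decremented). -/
def subst (a : Tm) (x : Nat) : Tm → Tm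
  | var k => if k = x then lift x 0 a else if x < k then var (k - 1) else var k
  | lam b => lam (subst a (x + 1) b)
  | app b c => app (subst a x b) (subst a x c)
  | pi A B => pi (subst a x A) (subst a (x + 1) B)
  | type => type
  | annot b A => annot (subst a x b) (subst a x A)

end Tm

/-- A typing context is a list of types; the head is the type of variable 0. -/
abbrev Ctx := List Tm

/-- `lookupTy Γ x = some A` means `x : A ∈ Γ` (with the type suitably shifted
    so that it is well-scoped in the whole context `Γ`). -/
def lookupTy : Ctx → Nat → Option Tm
  | [], _ => none
  | A :: _, 0 => some (Tm.lift 1 0 A)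
  | _ :: Γ, k + 1 => (lookupTy Γ k).map (Tm.lift 1 0)

/-- The declarative typing judgment `Γ ⊢ a : A`. -/
inductive HasType : Ctx → Tm → Tm → Prop
  | var {Γ x A} : lookupTy Γ x = some A → HasType Γ (.var x) A
  | type {Γ} : HasType Γ .type .type
  | pi {Γ A B} : HasType Γ A .type → HasType (A :: Γ) B .type →
      HasType Γ (.pi A B) .type
  | lam {Γ A a B} : HasType (A :: Γ) a B → HasType Γ A .type →
      HasType Γ (.lam a) (.pi A B)
  | app {Γ a b A B} : HasType Γ a (.pi A B) → HasType Γ b A →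
      HasType Γ (.app a b) (Tm.subst b 0 B)
  | annot {Γ a A} : HasType Γ a A → HasType Γ A .type →
      HasType Γ (.annot a A) A

/-- The judgment `⊢ Γ`: the context type checks. -/
inductive CtxWf : Ctx → Prop
  | nil : CtxWf []
  | cons {Γ A} : CtxWf Γ → HasType Γ A .type → CtxWf (A :: Γ)

mutual
/-- The bidirectional inference judgment `Γ ⊢ a ⇒ A`. -/
inductive Infers : Ctx → Tm → Tm → Prop
  | var {Γ x A} : lookupTy Γ x = some A → Infers Γ (.var x) A
  | type {Γ} : Infers Γ .type .type
  | pi {Γ A B} : Checks Γ A .type → Checks (A :: Γ) B .type →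
      Infers Γ (.pi A B) .type
  | app {Γ a b A B} : Infers Γ a (.pi A B) → Checks Γ b A →
      Infers Γ (.app a b) (Tm.subst b 0 B)
  | annot {Γ a A} : Checks Γ A .type → Checks Γ a A →
      Infers Γ (.annot a A) A

/-- The bidirectional checking judgment `Γ ⊢ a ⇐ A`. -/
inductive Checks : Ctx → Tm → Tm → Prop
  | lam {Γ A a B} : Checks (A :: Γ) a B → Checks Γ (.lam a) (.pi A B)
  | infer {Γ a A} : (∀ b, a ≠ .lam b) → Infers Γ a A → Checks Γ a A
end

namespace Tm

/-- The extension of a renaming of de Bruijn indices under one binder. -/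
def upr (r : Nat → Nat) : Nat → Nat
  | 0 => 0
  | k + 1 => r k + 1

/-- Simultaneous renaming of the variables of a term. -/
def ren (r : Nat → Nat) : Tm → Tm
  | var k => var (r k)
  | lam a => lam (ren (upr r) a)
  | app a b => app (ren r a) (ren r b)
  | pi A B => pi (ren r A) (ren (upr r) B)
  | type => type
  | annot a A => annot (ren r a) (ren r A)

/-- The extension of a simultaneous substitution under one binder. -/
def ups (s : Nat → Tm) : Nat → Tm
  | 0 => var 0
  | k + 1 => ren Nat.succ (s k)

/-- Simultaneous capture-avoiding substitution of `s k` for each variable `k` of a term. -/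
def inst (s : Nat → Tm) : Tm → Tm
  | var k => s k
  | lam a => lam (inst (ups s) a)
  | app a b => app (inst s a) (inst s b)
  | pi A B => pi (inst s A) (inst (ups s) B)
  | type => type
  | annot a A => annot (inst s a) (inst s A)

/-- The substitution sending variable `0` to `b` and lowering every other variable by one. -/
def single (b : Tm) : Nat → Tm
  | 0 => b
  | k + 1 => var k

/-! ### Composition laws -/

theorem ren_ren (t : Tm) : ∀ r r' : Nat → Nat,
    ren r' (ren r t) = ren (fun k => r' (r k)) t := by
  have up : ∀ r r' : Nat → Nat,
      (fun k => upr r' (upr r k)) = upr (fun k => r' (r k)) := by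
    intro r r'; funext k; cases k <;> rfl
  induction t <;> intro r r' <;> simp_all [ren]

theorem ren_eq_inst (t : Tm) : ∀ r : Nat → Nat, ren r t = inst (fun k => var (r k)) t := by
  have up : ∀ r : Nat → Nat, ups (fun k => var (r k)) = fun k => var (upr r k) := by
    intro r; funext k; cases k <;> rfl
  induction t <;> intro r <;> simp_all [ren, inst]

theorem inst_ren (t : Tm) : ∀ (r : Nat → Nat) (s : Nat → Tm),
    inst s (ren r t) = inst (fun k => s (r k)) t := by
  have up : ∀ (r : Nat → Nat) (s : Nat → Tm),
      (fun k => ups s (upr r k)) = ups (fun k => s (r k)) := by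
    intro r s; funext k; cases k <;> rfl
  induction t <;> intro r s <;> simp_all [ren, inst]

theorem ren_inst (t : Tm) : ∀ (s : Nat → Tm) (r : Nat → Nat),
    ren r (inst s t) = inst (fun k => ren r (s k)) t := by
  have up : ∀ (s : Nat → Tm) (r : Nat → Nat),
      (fun k => ren (upr r) (ups s k)) = ups (fun k => ren r (s k)) := by
    intro s r; funext k
    cases k with
    | zero => rfl
    | succ k => simp [ups, ren_ren, upr]
  induction t <;> intro s r <;> simp_all [ren, inst]

theorem inst_inst (t : Tm) : ∀ s s' : Nat → Tm,
    inst s' (inst s t) = inst (fun k => inst s' (s k)) t := by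
  have up : ∀ s s' : Nat → Tm,
      (fun k => inst (ups s') (ups s k)) = ups (fun k => inst s' (s k)) := by
    intro s s'; funext k
    cases k with
    | zero => rfl
    | succ k => simp [ups, inst_ren, ren_inst]
  induction t <;> intro s s' <;> simp_all [inst]

theorem inst_var (t : Tm) : inst var t = t := by
  have up : ups var = var := by
    funext k; cases k <;> rfl
  induction t <;> simp_all [inst]

/-! ### Shifting and single substitution as special cases -/

theorem lift_eq_ren (d : Nat) (t : Tm) : ∀ c : Nat,
    lift d c t = ren (fun k => if k < c then k else k + d) t := by
  have up : ∀ c : Nat, upr (fun k => if k < c then k else k + d)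
      = fun k => if k < c + 1 then k else k + d := by
    intro c; funext k
    cases k with
    | zero => simp [upr]
    | succ k => simp only [upr]; split_ifs <;> omega
  induction t with
  | var k => intro c; simp only [lift, ren]; split_ifs <;> rfl
  | _ => simp_all [lift, ren]

theorem lift_one (t : Tm) : lift 1 0 t = ren Nat.succ t := by
  simp [lift_eq_ren]

theorem lift_zero (d : Nat) (t : Tm) : lift d 0 t = ren (fun k => k + d) t := by
  simp [lift_eq_ren]

theorem subst_eq_inst (a t : Tm) : ∀ x : Nat,
    subst a x t = inst (fun k => if k = x then lift x 0 a
      else if x < k then var (k - 1) else var k) t := by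
  have up : ∀ x : Nat,
      ups (fun k => if k = x then lift x 0 a else if x < k then var (k - 1) else var k)
      = fun k => if k = x + 1 then lift (x + 1) 0 a
          else if x + 1 < k then var (k - 1) else var k := by
    intro x; funext k
    cases k with
    | zero => simp [ups]
    | succ k =>
      simp only [ups, Nat.add_right_cancel_iff, Nat.add_lt_add_iff_right]
      split_ifs with h h'
      · simp [lift_zero, ren_ren, Nat.add_assoc]
      · simp only [ren, var.injEq]; omega
      · rfl
  induction t with
  | var k => intro x; rfl
  | _ => simp_all [subst, inst]

theorem subst_zero (a t : Tm) : subst a 0 t = inst (single a) t := by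
  rw [subst_eq_inst]
  congr 1
  funext k
  cases k with
  | zero => simp [single, lift_zero, ren_eq_inst, inst_var]
  | succ k => simp [single]

theorem inst_subst_zero (s : Nat → Tm) (b B : Tm) :
    inst s (subst b 0 B) = subst (inst s b) 0 (inst (ups s) B) := by
  rw [subst_zero, subst_zero, inst_inst, inst_inst]
  congr 1
  funext k
  cases k with
  | zero => rfl
  | succ k => simp [single, ups, inst, inst_ren, inst_var]

theorem ren_subst_zero (r : Nat → Nat) (b B : Tm) :
    ren r (subst b 0 B) = subst (ren r b) 0 (ren (upr r) B) := by
  rw [subst_zero, subst_zero, ren_inst, inst_ren]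
  congr 1
  funext k
  cases k <;> rfl

end Tm

open Tm

/-! ### Weakening and substitution for the declarative system -/

theorem HasType.ren {Γ : Ctx} {a A : Tm} (h : HasType Γ a A) :
    ∀ {Δ : Ctx} {r : Nat → Nat},
      (∀ x T, lookupTy Γ x = some T → lookupTy Δ (r x) = some (Tm.ren r T)) →
      HasType Δ (Tm.ren r a) (Tm.ren r A) := by
  have up : ∀ {Γ Δ : Ctx} {r : Nat → Nat} (A : Tm),
      (∀ x T, lookupTy Γ x = some T → lookupTy Δ (r x) = some (Tm.ren r T)) →
      ∀ x T, lookupTy (A :: Γ) x = some T →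
        lookupTy (Tm.ren r A :: Δ) (upr r x) = some (Tm.ren (upr r) T) := by
    intro Γ Δ r A hr x T hx
    cases x with
    | zero =>
      simp only [lookupTy, Option.some.injEq] at hx
      subst hx
      simp [lookupTy, upr, lift_one, ren_ren]
    | succ x =>
      simp only [lookupTy, Option.map_eq_some_iff] at hx
      obtain ⟨U, hU, rfl⟩ := hx
      simp [lookupTy, upr, hr x U hU, lift_one, ren_ren]
  induction h with
  | var hx => intro Δ r hr; exact .var (hr _ _ hx)
  | type => intro Δ r hr; exact .type
  | pi _ _ ihA ihB => intro Δ r hr; exact .pi (ihA hr) (ihB (up _ hr))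
  | lam _ _ iha ihA => intro Δ r hr; exact .lam (iha (up _ hr)) (ihA hr)
  | app _ _ iha ihb =>
    intro Δ r hr
    rw [ren_subst_zero]
    exact .app (iha hr) (ihb hr)
  | annot _ _ iha ihA => intro Δ r hr; exact .annot (iha hr) (ihA hr)

theorem HasType.weaken {Γ : Ctx} {a A : Tm} (B : Tm) (h : HasType Γ a A) :
    HasType (B :: Γ) (Tm.ren Nat.succ a) (Tm.ren Nat.succ A) := by
  refine h.ren fun x T hx => ?_
  simp [lookupTy, hx, lift_one]

theorem HasType.inst {Γ : Ctx} {a A : Tm} (h : HasType Γ a A) :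
    ∀ {Δ : Ctx} {s : Nat → Tm},
      (∀ x T, lookupTy Γ x = some T → HasType Δ (s x) (Tm.inst s T)) →
      HasType Δ (Tm.inst s a) (Tm.inst s A) := by
  have up : ∀ {Γ Δ : Ctx} {s : Nat → Tm} (A : Tm),
      (∀ x T, lookupTy Γ x = some T → HasType Δ (s x) (Tm.inst s T)) →
      ∀ x T, lookupTy (A :: Γ) x = some T →
        HasType (Tm.inst s A :: Δ) (ups s x) (Tm.inst (ups s) T) := by
    intro Γ Δ s A hs x T hx
    -- Shifting and then substituting under the binder is substituting and then shifting.
    have comm : ∀ U : Tm, Tm.inst (ups s) (lift 1 0 U) = Tm.ren Nat.succ (Tm.inst s U) := by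
      intro U
      rw [lift_one, inst_ren, ren_inst]
      rfl
    cases x with
    | zero =>
      simp only [lookupTy, Option.some.injEq] at hx
      subst hx
      rw [comm]
      exact .var (by simp [lookupTy, lift_one])
    | succ x =>
      simp only [lookupTy, Option.map_eq_some_iff] at hx
      obtain ⟨U, hU, rfl⟩ := hx
      rw [comm]
      exact (hs x U hU).weaken _
  induction h with
  | var hx => intro Δ s hs; exact hs _ _ hx
  | type => intro Δ s hs; exact .type
  | pi _ _ ihA ihB => intro Δ s hs; exact .pi (ihA hs) (ihB (up _ hs))
  | lam _ _ iha ihA => intro Δ s hs; exact .lam (iha (up _ hs)) (ihA hs)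
  | app _ _ iha ihb =>
    intro Δ s hs
    rw [inst_subst_zero]
    exact .app (iha hs) (ihb hs)
  | annot _ _ iha ihA => intro Δ s hs; exact .annot (iha hs) (ihA hs)

theorem HasType.subst_type {Γ : Ctx} {b A B : Tm} (hB : HasType (A :: Γ) B .type)
    (hb : HasType Γ b A) : HasType Γ (Tm.subst b 0 B) .type := by
  rw [subst_zero]
  refine hB.inst (s := single b) fun x T hx => ?_
  have cancel : ∀ U : Tm, Tm.inst (single b) (lift 1 0 U) = U := by
    intro U
    rw [lift_one, inst_ren]
    exact inst_var U
  cases x with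
  | zero =>
    simp only [lookupTy, Option.some.injEq] at hx
    subst hx
    rw [cancel]
    exact hb
  | succ x =>
    simp only [lookupTy, Option.map_eq_some_iff] at hx
    obtain ⟨U, hU, rfl⟩ := hx
    rw [cancel]
    exact .var hU

/-! ### Soundness and regularity -/

theorem HasType.pi_inv {Γ : Ctx} {A B : Tm} (h : HasType Γ (.pi A B) .type) :
    HasType Γ A .type ∧ HasType (A :: Γ) B .type := by
  cases h with
  | pi hA hB => exact ⟨hA, hB⟩

theorem CtxWf.lookup {Γ : Ctx} (hΓ : CtxWf Γ) :
    ∀ {x : Nat} {T : Tm}, lookupTy Γ x = some T → HasType Γ T .type := by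
  induction hΓ with
  | nil => intro x T hx; simp [lookupTy] at hx
  | cons _ hA ih =>
    intro x T hx
    cases x with
    | zero =>
      simp only [lookupTy, Option.some.injEq] at hx
      subst hx
      rw [lift_one]
      exact hA.weaken _
    | succ x =>
      simp only [lookupTy, Option.map_eq_some_iff] at hx
      obtain ⟨U, hU, rfl⟩ := hx
      rw [lift_one]
      exact (ih hU).weaken _

mutual

/-- Soundness of inference, with regularity of the inferred type. -/
theorem Infers.sound {Γ : Ctx} {a A : Tm} (h : Infers Γ a A) (hΓ : CtxWf Γ) :
    HasType Γ a A ∧ HasType Γ A .type := by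
  cases h with
  | var hx => exact ⟨.var hx, hΓ.lookup hx⟩
  | type => exact ⟨.type, .type⟩
  | pi hA hB =>
    have hA' := hA.sound hΓ .type
    exact ⟨.pi hA' (hB.sound (.cons hΓ hA') .type), .type⟩
  | app ha hb =>
    obtain ⟨ha', hP⟩ := ha.sound hΓ
    obtain ⟨hA, hB⟩ := hP.pi_inv
    have hb' := hb.sound hΓ hA
    exact ⟨.app ha' hb', hB.subst_type hb'⟩
  | annot hA ha =>
    have hAT := hA.sound hΓ .type
    exact ⟨.annot (ha.sound hΓ hAT) hAT, hAT⟩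

/-- Soundness of checking against a well-formed type. The hypothesis on `A` is needed because
the checking rule for λ-abstractions does not check the domain of the function type. -/
theorem Checks.sound {Γ : Ctx} {a A : Tm} (h : Checks Γ a A) (hΓ : CtxWf Γ)
    (hT : HasType Γ A .type) : HasType Γ a A := by
  cases h with
  | lam ha =>
    obtain ⟨hA, hB⟩ := hT.pi_inv
    exact .lam (ha.sound (.cons hΓ hA) hB) hA
  | infer _ ha => exact (ha.sound hΓ).1

end

/-- Regularity for the bidirectional type system:
    if `Γ ⊢ a ⇒ A` and `⊢ Γ`, then `Γ ⊢ A : Type`. -/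
theorem infers_regularity {Γ : Ctx} {a A : Tm}
    (h : Infers Γ a A) (hΓ : CtxWf Γ) : HasType Γ A .type := by
  exact (h.sound hΓ).2
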